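/- Let G be a finite group with T(G) ≤ 2·k(G), where T(G) is the sum of the degrees of the complex irreducible characters of G and k(G) is the number of conjugacy classes of G. Then T₂(G) ≤ 3·|G : G'|, where T₂(G) is the sum of the degrees of those irreducible characters of G of degree strictly greater than 2 and G' is the derived subgroup of G. -/

import Mathlib

/-- `χ : G → ℂ` is an irreducible complex character of the group `G`, i.e. the character
of a simple (irreducible) finite-dimensional complex representation of `G`. -/
def IsIrrChar (G : Type) [Group G] (χ : G → ℂ) : Prop :=
  ∃ V : FDRep ℂ G, CategoryTheory.Simple V ∧ χ = V.character

/-- `T(G)`: the sum of the degrees (values at the identity) of the complex irreducible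
characters of `G`. -/
noncomputable def charDegreeSum (G : Type) [Group G] : ℝ :=
  ∑ᶠ χ ∈ {χ : G → ℂ | IsIrrChar G χ}, (χ 1).re

/-- `T₂(G)`: the sum of the degrees of the complex irreducible characters of `G` of degree
strictly greater than `2`. -/
noncomputable def charDegreeSumGtTwo (G : Type) [Group G] : ℝ :=
  ∑ᶠ χ ∈ {χ : G → ℂ | IsIrrChar G χ ∧ 2 < (χ 1).re}, (χ 1).re

open CategoryTheory in
/-- Orthogonality of irreducible characters. -/
theorem irr_self (G : Type) [Group G] [Fintype G] {χ : G → ℂ} (hχ : IsIrrChar G χ) :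
    ∑ g : G, χ g * χ g⁻¹ = (Nat.card G : ℂ) := by
  obtain ⟨V, hV, rfl⟩ := hχ
  exact (FDRep.simple_iff_char_is_norm_one V).1 hV

open CategoryTheory in
theorem irr_orth (G : Type) [Group G] [Fintype G] {χ ψ : G → ℂ} (hχ : IsIrrChar G χ)
    (hψ : IsIrrChar G ψ) (hne : χ ≠ ψ) :
    ∑ g : G, χ g * ψ g⁻¹ = 0 := by
  obtain ⟨V, hV, rfl⟩ := hχ
  obtain ⟨W, hW, rfl⟩ := hψ
  have hc : (Nat.card G : ℂ) ≠ 0 := NeZero.ne _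
  have := invertibleOfNonzero hc
  have h := FDRep.char_orthonormal V W
  rw [if_neg (fun ⟨i⟩ => hne (FDRep.char_iso i))] at h
  exact (mul_eq_zero.1 h).resolve_left (inv_ne_zero hc)

theorem irr_linearIndependent (G : Type) [Group G] [Finite G] :
    LinearIndependent ℂ (fun χ : {χ : G → ℂ | IsIrrChar G χ} => (χ : G → ℂ)) := by
  have := Fintype.ofFinite G
  rw [linearIndependent_iff']
  intro s c hc χ hχ
  have h1 : ∑ g : G, (∑ ψ ∈ s, c ψ • (ψ : G → ℂ)) g * χ.1 g⁻¹ = 0 := by rw [hc]; simp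
  have h2 : ∑ g : G, (∑ ψ ∈ s, c ψ • (ψ : G → ℂ)) g * χ.1 g⁻¹ = c χ * (Nat.card G : ℂ) := by
    simp only [Finset.sum_apply, Pi.smul_apply, smul_eq_mul, Finset.sum_mul]
    rw [Finset.sum_comm, Finset.sum_eq_single χ]
    · rw [← irr_self G χ.2, Finset.mul_sum]
      simp only [mul_assoc]
    · intro ψ _ hne
      simp only [mul_assoc]
      rw [← Finset.mul_sum, irr_orth G ψ.2 χ.2 (fun h => hne (Subtype.ext h)), mul_zero]
    · exact fun h => absurd hχ h
  rw [h1] at h2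
  exact (mul_eq_zero.1 h2.symm).resolve_right (NeZero.ne _)

theorem irr_finite (G : Type) [Group G] [Finite G] : {χ : G → ℂ | IsIrrChar G χ}.Finite :=
  (irr_linearIndependent G).finite

theorem irr_degree (G : Type) [Group G] [Finite G] {χ : G → ℂ} (hχ : IsIrrChar G χ) :
    ∃ n : ℕ, 0 < n ∧ χ 1 = n := by
  have := Fintype.ofFinite G
  have h := irr_self G hχ
  obtain ⟨V, hV, rfl⟩ := hχ
  refine ⟨Module.finrank ℂ V, ?_, FDRep.char_one V⟩
  rw [Nat.pos_iff_ne_zero]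
  intro h0
  have hs : Subsingleton V := Module.finrank_zero_iff.1 h0
  have hz : ∀ g, V.character g = 0 := by
    intro g
    have : V.ρ g = 0 := LinearMap.ext fun v => Subsingleton.elim _ _
    rw [FDRep.character, this, map_zero]
  simp only [hz, mul_zero, Finset.sum_const_zero] at h
  exact NeZero.ne (Nat.card G : ℂ) h.symm

theorem isIrrChar_of_irreducible (G : Type) [Group G] [Finite G] {V : Type} [AddCommGroup V]
    [Module ℂ V] [FiniteDimensional ℂ V] (ρ : Representation ℂ G V)
    [Representation.IsIrreducible ρ] : IsIrrChar G ρ.character := by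
  have := Fintype.ofFinite G
  have hc : (Nat.card G : ℂ) ≠ 0 := NeZero.ne _
  have := invertibleOfNonzero hc
  refine ⟨FDRep.of ρ, ?_, rfl⟩
  rw [FDRep.simple_iff_char_is_norm_one]
  have h := Representation.char_orthonormal ρ ρ
  rw [if_pos ⟨Representation.Equiv.refl ρ⟩, inv_mul_eq_one₀ hc] at h
  exact h.symm

theorem class_zero_on_irr (G : Type) [Group G] [Fintype G] {V : Type} [AddCommGroup V]
    [Module ℂ V] [FiniteDimensional ℂ V] (ρ : Representation ℂ G V)
    [Representation.IsIrreducible ρ] (f : G → ℂ) (hf : ∀ g h, f (h * g * h⁻¹) = f g)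
    (h0 : ∑ g, f g * ρ.character g = 0) : ∑ g, f g • ρ g = 0 := by
  have hcomm : ∀ h : G, (∑ g, f g • ρ g) ∘ₗ ρ h = ρ h ∘ₗ (∑ g, f g • ρ g) := by
    intro h
    change (∑ g, f g • ρ g) * ρ h = ρ h * (∑ g, f g • ρ g)
    rw [Finset.sum_mul, Finset.mul_sum]
    refine (Fintype.sum_equiv (MulAut.conj h).toEquiv _ _ fun g => ?_).symm
    simp [hf, ← map_mul]
  let F : Representation.IntertwiningMap ρ ρ := ⟨∑ g, f g • ρ g, hcomm⟩
  obtain ⟨c, hc⟩ :=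
    (Representation.IsIrreducible.algebraMap_intertwiningMap_bijective_of_isAlgClosed
      (ρ := ρ)).2 F
  have hc' : ∑ g, f g • ρ g = c • (1 : V →ₗ[ℂ] V) := by
    have := congrArg (fun f : Representation.IntertwiningMap ρ ρ => f.toLinearMap) hc
    exact this.symm
  have htr := congrArg (LinearMap.trace ℂ V) hc'
  simp only [map_sum, map_smul, smul_eq_mul, LinearMap.trace_one] at htr
  have hz : c * (Module.finrank ℂ V : ℂ) = 0 := by rw [← htr]; exact h0
  rcases mul_eq_zero.1 hz with h | h
  · rw [hc', h, zero_smul]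
  · have hs : Subsingleton V := Module.finrank_zero_iff.1 (by exact_mod_cast h)
    exact LinearMap.ext fun v => Subsingleton.elim _ _

theorem class_smul_eq_zero (G : Type) [Group G] [Fintype G] (f : G → ℂ)
    (hf : ∀ g h, f (h * g * h⁻¹) = f g)
    (h0 : ∀ χ, IsIrrChar G χ → ∑ g, f g * χ g = 0)
    (M : Type) [AddCommGroup M] [Module ℂ M] [Module (MonoidAlgebra ℂ G) M]
    [IsScalarTower ℂ (MonoidAlgebra ℂ G) M]
    [hM : IsSimpleModule (MonoidAlgebra ℂ G) M] (m : M) :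
    (∑ g, MonoidAlgebra.single g (f g) : MonoidAlgebra ℂ G) • m = 0 := by
  let ρ : Representation ℂ G M := Representation.ofModule' (k := ℂ) (G := G) M
  have hact : ∀ (r : MonoidAlgebra ℂ G) (x : M), ρ.asAlgebraHom r x = r • x := by
    intro r x
    have : ρ.asAlgebraHom = Algebra.lsmul ℂ ℂ M :=
      (MonoidAlgebra.lift ℂ (M →ₗ[ℂ] M) G).apply_symm_apply _
    rw [this]
    rfl
  let e : ρ.asModule ≃ₗ[MonoidAlgebra ℂ G] M :=
    { ρ.asModuleEquiv with
      map_smul' := fun r x => by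
        change ρ.asModuleEquiv (r • x) = r • ρ.asModuleEquiv x
        rw [Representation.asModuleEquiv_map_smul, hact] }
  have hirr : Representation.IsIrreducible ρ :=
    (Representation.irreducible_iff_isSimpleModule_asModule ρ).2 (IsSimpleModule.congr e)
  have hfinA : FiniteDimensional ℂ (MonoidAlgebra ℂ G) := inferInstance
  have hfin : FiniteDimensional ℂ M := Module.Finite.trans (MonoidAlgebra ℂ G) _
  have h := class_zero_on_irr G ρ f hf (h0 _ (isIrrChar_of_irreducible G ρ))
  have hzρ : ρ.asAlgebraHom (∑ g, MonoidAlgebra.single g (f g)) = 0 := by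
    rw [← h]
    simp [Representation.asAlgebraHom_single]
  rw [← hact, hzρ, LinearMap.zero_apply]

theorem class_eq_zero (G : Type) [Group G] [Fintype G] (f : G → ℂ)
    (hf : ∀ g h, f (h * g * h⁻¹) = f g)
    (h0 : ∀ χ, IsIrrChar G χ → ∑ g, f g * χ g = 0) : f = 0 := by
  classical
  let z : MonoidAlgebra ℂ G := ∑ g, MonoidAlgebra.single g (f g)
  have hz : z ∈ Ring.jacobson (MonoidAlgebra ℂ G) := by
    rw [Ring.jacobson_eq_sInf_isMaximal, Ideal.mem_sInf]
    intro I hI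
    have hI' : Ideal.IsMaximal I := hI
    have hM : IsSimpleModule (MonoidAlgebra ℂ G) (MonoidAlgebra ℂ G ⧸ I) :=
      isSimpleModule_iff_isCoatom.2 hI'.out
    have h1 := class_smul_eq_zero G f hf h0 (MonoidAlgebra ℂ G ⧸ I) (Submodule.Quotient.mk 1)
    rw [← Submodule.Quotient.mk_smul, Submodule.Quotient.mk_eq_zero, smul_eq_mul, mul_one] at h1
    exact h1
  rw [IsSemisimpleRing.jacobson_eq_bot] at hz
  have hz0 : z = 0 := hz
  funext g
  have := congrArg (fun a : MonoidAlgebra ℂ G => a.coeff g) hz0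
  simpa [z, Finsupp.single_apply] using this

theorem card_conj_le (G : Type) [Group G] [Finite G] :
    Nat.card (ConjClasses G) ≤ {χ : G → ℂ | IsIrrChar G χ}.ncard := by
  classical
  have := Fintype.ofFinite G
  have := Fintype.ofFinite (ConjClasses G)
  have := (irr_finite G).fintype
  let Φ : (ConjClasses G → ℂ) →ₗ[ℂ] ({χ : G → ℂ | IsIrrChar G χ} → ℂ) :=
    { toFun := fun f χ => ∑ g, f (ConjClasses.mk g) * χ.1 g
      map_add' := by
        intro a b; funext χ; simp [add_mul, Finset.sum_add_distrib]
      map_smul' := by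
        intro a b; funext χ; simp [mul_assoc, Finset.mul_sum] }
  have hΦ : Function.Injective Φ := by
    rw [injective_iff_map_eq_zero]
    intro f hf
    have := class_eq_zero G (fun g => f (ConjClasses.mk g)) (fun g h => by
        congr 1
        exact ConjClasses.mk_eq_mk_iff_isConj.2 (isConj_iff.2 ⟨h, rfl⟩).symm)
      (fun χ hχ => congrFun hf ⟨χ, hχ⟩)
    funext c
    obtain ⟨g, rfl⟩ := ConjClasses.mk_surjective c
    exact congrFun this g
  have := LinearMap.finrank_le_finrank_of_injective hΦ
  rw [Module.finrank_fintype_fun_eq_card, Module.finrank_fintype_fun_eq_card] at this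
  rw [Nat.card_eq_fintype_card, ← Nat.card_coe_set_eq, Nat.card_eq_fintype_card]
  exact this

theorem trace_mul_of_finrank_one {V : Type} [AddCommGroup V]
    [Module ℂ V] [FiniteDimensional ℂ V] (h : Module.finrank ℂ V = 1) (a b : V →ₗ[ℂ] V) :
    LinearMap.trace ℂ V (a * b) = LinearMap.trace ℂ V a * LinearMap.trace ℂ V b := by
  have hE : ∀ a : V →ₗ[ℂ] V, ∃ c : ℂ, c • (1 : V →ₗ[ℂ] V) = a := by
    intro a
    have : Nontrivial V := Module.nontrivial_of_finrank_pos (R := ℂ) (by omega)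
    exact exists_smul_eq_of_finrank_eq_one (by rw [Module.finrank_linearMap, h]) one_ne_zero a
  obtain ⟨c, rfl⟩ := hE a
  obtain ⟨d, rfl⟩ := hE b
  simp [h, mul_comm]

theorem card_linear_le (G : Type) [Group G] [Finite G] :
    {χ : G → ℂ | IsIrrChar G χ ∧ χ 1 = 1}.ncard ≤ (commutator G).index := by
  have hmul : ∀ χ : {χ : G → ℂ | IsIrrChar G χ ∧ χ 1 = 1}, ∀ a b, χ.1 (a * b) = χ.1 a * χ.1 b := by
    rintro ⟨χ, ⟨V, hV, rfl⟩, h1⟩ a b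
    rw [FDRep.char_one] at h1
    simp only [FDRep.character, map_mul]
    exact trace_mul_of_finrank_one (by exact_mod_cast h1) _ _
  let Ψ : {χ : G → ℂ | IsIrrChar G χ ∧ χ 1 = 1} → (Abelianization G →* ℂˣ) := fun χ =>
    Abelianization.lift (MonoidHom.toHomUnits ⟨⟨χ.1, χ.2.2⟩, hmul χ⟩)
  have hΨ : Function.Injective Ψ := by
    intro χ ψ h
    apply Subtype.ext
    funext g
    have := congrArg (fun u : ℂˣ => (u : ℂ)) (DFunLike.congr_fun h (Abelianization.of g))
    simpa [Ψ] using this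
  have hfin : Finite (Abelianization G) := inferInstanceAs (Finite (G ⧸ commutator G))
  have hcard : Nat.card (Abelianization G →* ℂˣ) = (commutator G).index :=
    CommGroup.card_monoidHom_of_hasEnoughRootsOfUnity (Abelianization G) ℂ
  have : Finite (Abelianization G →* ℂˣ) := by
    apply Nat.finite_of_card_ne_zero
    rw [hcard]
    exact Subgroup.index_ne_zero_of_finite
  rw [← hcard, ← Nat.card_coe_set_eq]
  exact Nat.card_le_card_of_injective Ψ hΨ

theorem degree_sum_gt_two_le_three_mul_index_commutator
    (G : Type) [Group G] [Finite G]
    (h : charDegreeSum G ≤ 2 * (Nat.card (ConjClasses G) : ℝ)) :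
    charDegreeSumGtTwo G ≤ 3 * ((commutator G).index : ℝ) := by
  have hfin := irr_finite G
  have hk := card_conj_le G
  have hl := card_linear_le G
  rw [charDegreeSum, finsum_mem_eq_finite_toFinset_sum _ hfin] at h
  have hfin2 : {χ : G → ℂ | IsIrrChar G χ ∧ 2 < (χ 1).re}.Finite :=
    hfin.subset fun χ hχ => hχ.1
  rw [charDegreeSumGtTwo, finsum_mem_eq_finite_toFinset_sum _ hfin2]
  have hfin1 : {χ : G → ℂ | IsIrrChar G χ ∧ χ 1 = 1}.Finite :=
    hfin.subset fun χ hχ => hχ.1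
  rw [Set.ncard_eq_toFinset_card _ hfin] at hk
  rw [Set.ncard_eq_toFinset_card _ hfin1] at hl
  set S := hfin.toFinset with hS
  have e1 : hfin1.toFinset = S.filter (fun χ => χ 1 = 1) := by ext χ; simp [hS]
  have e2 : hfin2.toFinset = S.filter (fun χ => 2 < (χ 1).re) := by ext χ; simp [hS]
  rw [e1, Finset.card_filter] at hl
  rw [e2, Finset.sum_filter]
  have hl' : ∑ χ ∈ S, (if χ 1 = 1 then (1 : ℝ) else 0) ≤ (commutator G).index := by
    exact_mod_cast hl
  have hk' : (Nat.card (ConjClasses G) : ℝ) ≤ ∑ χ ∈ S, (1 : ℝ) := by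
    simpa using hk
  have key : ∑ χ ∈ S, (if 2 < (χ 1).re then (χ 1).re else 0) ≤
      ∑ χ ∈ S, (3 * (χ 1).re - 6 * 1 + 3 * (if χ 1 = 1 then (1 : ℝ) else 0)) := by
    apply Finset.sum_le_sum
    intro χ hχ
    obtain ⟨n, hn, hd⟩ := irr_degree G (hfin.mem_toFinset.1 hχ)
    rw [hd]
    have hre : ((n : ℂ)).re = (n : ℝ) := Complex.natCast_re n
    rw [hre]
    rcases Nat.lt_or_ge 2 n with h2 | h2
    · have h3 : (3 : ℝ) ≤ n := by exact_mod_cast h2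
      rw [if_pos (by linarith)]
      split_ifs <;> linarith
    · interval_cases n <;> norm_num
  rw [Finset.sum_add_distrib, Finset.sum_sub_distrib, ← Finset.mul_sum, ← Finset.mul_sum,
    ← Finset.mul_sum] at key
  linarith
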